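/- Lower enhancement via cutsets, case p < p' (Proposition 3.1, item 1). Let (V, E, ends, α) be a finite graph with boundary condition, p ∈ (0,1), q > 0, and suppose p < p'. Let Ê ⊆ E be such that for every e ∈ Ê, e ∉ E∖Ê trivially holds and Q_{E∖Ê}(e) is nonempty (every e ∈ Ê admits a cutset included in E∖Ê). For e ∈ Ê set ε̂_e := (p'−p) · P_{max(p,p')}({ω : ∃ χ ∈ Q_{E∖Ê}(e) with ω e' = false for every e' ∈ χ}), and set ε̂_e := 0 for e ∉ Ê. Then P_{(p+ε̂_e)_{e∈E}} ≼ φ^α_{G,p,q}. -/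

import Mathlib

open scoped Classical

noncomputable section

namespace FKPaper

variable {V E : Type*}

/-- One-step adjacency between wired vertices through an edge in `F`. -/
def Step (ends : E → Sym2 V) (α : Setoid V) (F : Set E) (x y : Quotient α) : Prop :=
  ∃ e ∈ F, Sym2.map (Quotient.mk α) (ends e) = s(x, y)

/-- Setoid of connected components of the wired multigraph with edge set `F`. -/
def connSetoid (ends : E → Sym2 V) (α : Setoid V) (F : Set E) : Setoid (Quotient α) :=
  Relation.EqvGen.setoid (Step ends α F)

/-- Connectivity in the wired multigraph with edge set `F`. -/
def Conn (ends : E → Sym2 V) (α : Setoid V) (F : Set E) (x y : Quotient α) : Prop :=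
  (connSetoid ends α F).r x y

/-- The two endpoints of `e` are joined in the wired multigraph with edge set `F`. -/
def EndsConn (ends : E → Sym2 V) (α : Setoid V) (F : Set E) (e : E) : Prop :=
  ∀ x y : V, ends e = s(x, y) → Conn ends α F (Quotient.mk α x) (Quotient.mk α y)

/-- Number of connected components `k(ω, α)`. -/
def numComponents (ends : E → Sym2 V) (α : Setoid V) (ω : E → Bool) : ℕ :=
  Nat.card (Quotient (connSetoid ends α {e | ω e = true}))

/-- `p' = p / (p + q (1 - p))`. -/
def pPrime (p q : ℝ) : ℝ := p / (p + q * (1 - p))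

/-- Total mass of a set under a weight function. -/
def massOf {ι : Type*} [Fintype ι] (w : ι → ℝ) (A : Set ι) : ℝ :=
  ∑ x ∈ Finset.univ.filter (· ∈ A), w x

/-- Normalized probability of a set under a weight function. -/
def probOf {ι : Type*} [Fintype ι] (w : ι → ℝ) (A : Set ι) : ℝ :=
  massOf w A / massOf w Set.univ

/-- FK weight of a configuration. -/
def fkWeight [Fintype E] (ends : E → Sym2 V) (α : Setoid V) (p q : ℝ) (ω : E → Bool) : ℝ :=
  p ^ (Finset.univ.filter fun e => ω e = true).card *
    (1 - p) ^ (Finset.univ.filter fun e => ω e = false).card *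
    q ^ numComponents ends α ω

/-- The FK (random cluster) probability measure `φ^α_{G,p,q}`. -/
def fkProb [Fintype E] (ends : E → Sym2 V) (α : Setoid V) (p q : ℝ)
    (A : Set (E → Bool)) : ℝ :=
  probOf (fkWeight ends α p q) A

/-- Inhomogeneous Bernoulli weight. -/
def berWeight [Fintype E] (pe : E → ℝ) (ω : E → Bool) : ℝ :=
  ∏ e, if ω e = true then pe e else 1 - pe e

/-- Inhomogeneous Bernoulli product measure `P_{(p_e)}`. -/
def berProb [Fintype E] (pe : E → ℝ) (A : Set (E → Bool)) : ℝ :=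
  probOf (berWeight pe) A

/-- Increasing sets of configurations. -/
def Increasing (A : Set (E → Bool)) : Prop :=
  ∀ ⦃ω ω' : E → Bool⦄, ω ∈ A → (∀ e, ω e ≤ ω' e) → ω' ∈ A

/-- Stochastic domination `μ ≼ ν`. -/
def StochDom [Fintype E] (μ ν : Set (E → Bool) → ℝ) : Prop :=
  ∀ A : Set (E → Bool), Increasing A → μ A ≤ ν A

/-- `Q_F(e)`: cutsets for `e` included in `F`. -/
def Cutsets (ends : E → Sym2 V) (α : Setoid V) (F : Set E) (e : E) : Set (Set E) :=
  {χ | χ ⊆ F ∧ ¬ EndsConn ends α {e' | e' ∉ χ ∧ e' ≠ e} e}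


/-!
Given the states of all other edges, an edge is open under the FK measure with probability `p` or
`p'`, the latter exactly when the other open edges do not join its endpoints. Since `p < p'` forces
`q < 1`, every such conditional probability lies in `[p, p']`.

Reveal the edges of `Ê` first and those of `E ∖ Ê` afterwards. Let `e ∈ Ê`, and condition on other
edges of `Ê` only. Edges of `E ∖ Ê` are then open with conditional probability at most `p'`, so a
closed cutset for `e` in `E ∖ Ê`, a decreasing event, is at least as likely as under `P_{p'}`. On
that event `e` is open with conditional probability `p'`, and otherwise at least `p`; this yields
`p + ε̂_e`. The edges of `E ∖ Ê` are open with conditional probability at least `p`. Averaging an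
increasing function over one edge at a time, starting from the edge revealed last, turns these
bounds into stochastic domination.
-/

open Function

section BernoulliMean

variable [Fintype E]

/-- Expectation under the Bernoulli product measure `P_{(p_e)}`. -/
def berMean (pe : E → ℝ) (f : (E → Bool) → ℝ) : ℝ :=
  ∑ ω, berWeight pe ω * f ω

/-- Average of `f` over the state of the edge `e`, made open with probability `s`. -/
def averageEdge (s : ℝ) (e : E) (f : (E → Bool) → ℝ) (ω : E → Bool) : ℝ :=
  s * f (update ω e true) + (1 - s) * f (update ω e false)

/-- Average of `f` over the states of the edges in `S`, sampled from `P_{(p_e)}`. -/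
def resample (pe : E → ℝ) (S : Set E) (f : (E → Bool) → ℝ) (ω : E → Bool) : ℝ :=
  berMean pe fun η => f (S.piecewise η ω)

theorem massOf_eq_sum_mul_indicator {ι : Type*} [Fintype ι] (w : ι → ℝ) (A : Set ι) :
    massOf w A = ∑ x, w x * A.indicator 1 x := by
  simp [massOf, Set.indicator_apply, Finset.sum_filter]

theorem massOf_univ {ι : Type*} [Fintype ι] (w : ι → ℝ) : massOf w Set.univ = ∑ x, w x := by
  simp [massOf]

theorem sum_update_true_add_update_false {M : Type*} [AddCommMonoid M] (e : E)
    (F : (E → Bool) → M) :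
    ∑ ω, (F (update ω e true) + F (update ω e false)) = 2 • ∑ ω, F ω := by
  have flip_involutive : Involutive fun ω : E → Bool => update ω e (!ω e) := fun ω => by simp
  have pair_eq (ω : E → Bool) :
      F (update ω e true) + F (update ω e false) = F ω + F (update ω e (!ω e)) := by
    have hω := update_eq_self e ω
    cases h : ω e <;> rw [h] at hω <;> simp [hω, add_comm]
  have sum_flip : ∑ ω, F (update ω e (!ω e)) = ∑ ω, F ω :=
    Equiv.sum_comp flip_involutive.toPerm F
  simp_rw [pair_eq, Finset.sum_add_distrib, sum_flip, two_nsmul]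

theorem one_sub_mul_berWeight_update_true (pe : E → ℝ) (ω : E → Bool) (e : E) :
    (1 - pe e) * berWeight pe (update ω e true) = pe e * berWeight pe (update ω e false) := by
  have split (b : Bool) : berWeight pe (update ω e b) = (if b = true then pe e else 1 - pe e) *
      ∏ x ∈ Finset.univ.erase e, if ω x = true then pe x else 1 - pe x := by
    rw [berWeight, ← Finset.mul_prod_erase _ _ (Finset.mem_univ e), update_self]
    congr 1
    refine Finset.prod_congr rfl fun x hx => ?_
    rw [update_of_ne (Finset.ne_of_mem_erase hx)]
  simp only [split, if_true, Bool.false_eq_true, if_false]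
  ring

theorem sum_berWeight (pe : E → ℝ) : ∑ ω, berWeight pe ω = 1 := by
  have h := Finset.prod_univ_sum (fun _ : E => (Finset.univ : Finset Bool))
    fun e b => if b = true then pe e else 1 - pe e
  rw [Fintype.piFinset_univ] at h
  simp [berWeight, ← h]

theorem berWeight_nonneg {pe : E → ℝ} (hpe : ∀ e, pe e ∈ Set.Icc 0 1) (ω : E → Bool) :
    0 ≤ berWeight pe ω :=
  Finset.prod_nonneg fun e _ => by split_ifs <;> linarith [(hpe e).1, (hpe e).2]

theorem berProb_eq_berMean_indicator (pe : E → ℝ) (A : Set (E → Bool)) :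
    berProb pe A = berMean pe (A.indicator 1) := by
  rw [berProb, probOf, massOf_univ, sum_berWeight, div_one, massOf_eq_sum_mul_indicator, berMean]

theorem berMean_mono {pe : E → ℝ} (hpe : ∀ e, pe e ∈ Set.Icc 0 1) : Monotone (berMean pe) :=
  fun _ _ h => Finset.sum_le_sum fun ω _ =>
    mul_le_mul_of_nonneg_left (h ω) (berWeight_nonneg hpe ω)

theorem berMean_const (pe : E → ℝ) (c : ℝ) : berMean pe (fun _ => c) = c := by
  rw [berMean, ← Finset.sum_mul, sum_berWeight, one_mul]

theorem berMean_neg (pe : E → ℝ) (f : (E → Bool) → ℝ) : berMean pe (-f) = -berMean pe f := by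
  simp [berMean]

theorem berMean_averageEdge (pe : E → ℝ) (e : E) (f : (E → Bool) → ℝ) :
    berMean pe (averageEdge (pe e) e f) = berMean pe f := by
  suffices h : 2 • berMean pe (averageEdge (pe e) e f) = 2 • berMean pe f by simpa using h
  simp_rw [berMean, ← sum_update_true_add_update_false e]
  refine Finset.sum_congr rfl fun ω _ => ?_
  simp only [averageEdge, update_idem]
  linear_combination (f (update ω e false) - f (update ω e true)) *
    one_sub_mul_berWeight_update_true pe ω e

theorem berProb_mem_Icc {pe : E → ℝ} (hpe : ∀ e, pe e ∈ Set.Icc 0 1) (A : Set (E → Bool)) :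
    berProb pe A ∈ Set.Icc 0 1 := by
  rw [berProb_eq_berMean_indicator, ← berMean_const pe 0, ← berMean_const pe 1]
  exact ⟨berMean_mono hpe (Set.indicator_nonneg fun _ _ => zero_le_one),
    berMean_mono hpe (Set.indicator_le_self' fun _ _ => zero_le_one)⟩

theorem resample_empty (pe : E → ℝ) (f : (E → Bool) → ℝ) : resample pe ∅ f = f := by
  funext ω
  simp [resample, berMean_const]

theorem resample_neg (pe : E → ℝ) (S : Set E) (f : (E → Bool) → ℝ) :
    resample pe S (-f) = -resample pe S f :=
  funext fun _ => berMean_neg pe _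

theorem resample_eq_berMean {pe : E → ℝ} {S : Set E} {f : (E → Bool) → ℝ} (hf : DependsOn f S)
    (ω : E → Bool) : resample pe S f ω = berMean pe f :=
  congrArg (berMean pe) <| funext fun _ => hf fun _ he => Set.piecewise_eq_of_mem _ _ _ he

theorem dependsOn_resample (pe : E → ℝ) (S : Set E) (f : (E → Bool) → ℝ) :
    DependsOn (resample pe S f) Sᶜ := fun ω ω' h => by
  have piecewise_eq (η : E → Bool) : S.piecewise η ω = S.piecewise η ω' := by
    ext e
    by_cases he : e ∈ S
    · simp [he]
    · simpa [he] using h e he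
  simp only [resample, piecewise_eq]

theorem monotone_resample {pe : E → ℝ} (hpe : ∀ e, pe e ∈ Set.Icc 0 1) (S : Set E)
    {f : (E → Bool) → ℝ} (hf : Monotone f) : Monotone (resample pe S f) := fun _ _ h =>
  berMean_mono hpe fun _ => hf (Set.piecewise_mono (fun _ _ => le_rfl) fun e _ => h e)

theorem resample_insert (pe : E → ℝ) {S : Set E} {a : E} (ha : a ∉ S) (f : (E → Bool) → ℝ) :
    resample pe (insert a S) f = averageEdge (pe a) a (resample pe S f) := by
  funext ω
  have piecewise_update {T : Set E} (hT : T = insert a S) (η : E → Bool) (b : Bool) :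
      T.piecewise (update η a b) ω = S.piecewise η (update ω a b) := by
    ext e
    by_cases hea : e = a
    · subst hea
      simp [hT, ha]
    · by_cases he : e ∈ S <;> simp [hT, hea, he]
  rw [resample, ← berMean_averageEdge pe a]
  simp only [averageEdge, piecewise_update rfl, resample, berMean, Finset.mul_sum,
    ← Finset.sum_add_distrib]
  exact Finset.sum_congr rfl fun _ _ => by ring

end BernoulliMean

section Comparison

theorem apply_update_of_dependsOn {β : Type*} {f : (E → Bool) → β} {T : Set E} {e : E}
    (hf : DependsOn f T) (he : e ∉ T) (ω : E → Bool) (b : Bool) : f (update ω e b) = f ω :=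
  hf fun _ hx => update_of_ne (ne_of_mem_of_not_mem hx he) _ _

variable [Fintype E]

/-- Under the measure with weight `w`, the edge `e` is open with conditional probability at least
`s` given the states of the edges in `T`. Conditioning is tested against nonnegative functions `D`
of these states, and `w` may be a signed weight: for `-w` the inequality reads "at most `s`". -/
def CondOpenGE (w : (E → Bool) → ℝ) (s : ℝ) (e : E) (T : Set E) : Prop :=
  ∀ D : (E → Bool) → ℝ, 0 ≤ D → DependsOn D T →
    s * massOf (w * D) Set.univ ≤ massOf (w * D) {ω | ω e = true}

variable {w : (E → Bool) → ℝ} {e : E}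

theorem CondOpenGE.mono {s : ℝ} {T U : Set E} (h : CondOpenGE w s e U) (hTU : T ⊆ U) :
    CondOpenGE w s e T := fun D hD hDT => h D hD (hDT.mono hTU)

theorem sum_mul_le_massOf_open {c : (E → Bool) → ℝ} (hc : DependsOn c {e}ᶜ)
    (h : ∀ ω, c ω * w (update ω e false) ≤ (1 - c ω) * w (update ω e true)) :
    ∑ ω, c ω * w ω ≤ massOf w {ω | ω e = true} := by
  have hsum : 0 ≤ 2 • ∑ ω, (w ω * Set.indicator {ω | ω e = true} 1 ω - c ω * w ω) := by
    rw [← sum_update_true_add_update_false e]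
    refine Finset.sum_nonneg fun ω _ => ?_
    simp only [apply_update_of_dependsOn hc (Set.notMem_compl_iff.2 rfl),
      Set.indicator_apply, Set.mem_ofPred_eq, update_self, if_true, Bool.false_eq_true, if_false,
      Pi.one_apply]
    linarith [h ω]
  rw [nsmul_nonneg_iff two_ne_zero, Finset.sum_sub_distrib, sub_nonneg] at hsum
  rwa [massOf_eq_sum_mul_indicator]

theorem condOpenGE_of_forall_le {s : ℝ}
    (h : ∀ ω, s * w (update ω e false) ≤ (1 - s) * w (update ω e true)) :
    CondOpenGE w s e {e}ᶜ := fun D hD hDe => by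
  rw [massOf_univ, Finset.mul_sum]
  refine sum_mul_le_massOf_open (c := fun _ => s) (fun _ _ _ => rfl) fun ω => ?_
  simp only [Pi.mul_apply, apply_update_of_dependsOn hDe (Set.notMem_compl_iff.2 rfl), ← mul_assoc]
  exact mul_le_mul_of_nonneg_right (h ω) (hD ω)

theorem sum_mul_averageEdge_le {s : ℝ} {U : Set E} (hw : CondOpenGE w s e (U \ {e}))
    {f : (E → Bool) → ℝ} (hf : Monotone f) (hfU : DependsOn f U) :
    ∑ ω, w ω * averageEdge s e f ω ≤ ∑ ω, w ω * f ω := by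
  let D : (E → Bool) → ℝ := fun ω => f (update ω e true) - f (update ω e false)
  have hD : 0 ≤ D := fun ω => sub_nonneg.2 <| hf <| update_le_update_iff'.2 (Bool.false_le _)
  have f_update_eq {ω ω' : E → Bool} (h : ∀ x ∈ U \ {e}, ω x = ω' x) (b : Bool) :
      f (update ω e b) = f (update ω' e b) := hfU fun x hx => by
    by_cases hxe : x = e
    · simp [hxe]
    · simpa [hxe] using h x ⟨hx, hxe⟩
  have hDU : DependsOn D (U \ {e}) := fun ω ω' h => by simp only [D, f_update_eq h]
  have f_eq (ω : E → Bool) :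
      f ω = f (update ω e false) + D ω * Set.indicator {ω | ω e = true} 1 ω := by
    have hω := update_eq_self e ω
    cases h : ω e <;> rw [h] at hω <;> simp [D, h, hω]
  have average_eq (ω : E → Bool) : averageEdge s e f ω = f (update ω e false) + s * D ω := by
    simp only [averageEdge, D]
    ring
  have increment_le := hw D hD hDU
  rw [massOf_univ, massOf_eq_sum_mul_indicator, Finset.mul_sum] at increment_le
  calc ∑ ω, w ω * averageEdge s e f ω
      = ∑ ω, w ω * f (update ω e false) + ∑ ω, s * (w * D) ω := by
        rw [← Finset.sum_add_distrib]
        refine Finset.sum_congr rfl fun ω _ => ?_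
        rw [average_eq, Pi.mul_apply]
        ring
    _ ≤ ∑ ω, w ω * f (update ω e false) +
          ∑ ω, (w * D) ω * Set.indicator {ω | ω e = true} 1 ω := by gcongr
    _ = ∑ ω, w ω * f ω := by
        rw [← Finset.sum_add_distrib]
        refine Finset.sum_congr rfl fun ω _ => ?_
        rw [f_eq ω, Pi.mul_apply]
        ring

theorem sum_mul_resample_union_le {pe : E → ℝ} (hpe : ∀ e, pe e ∈ Set.Icc 0 1) {S₀ S : Set E}
    (hw : ∀ e ∈ S, e ∉ S₀ → CondOpenGE w (pe e) e (S₀ᶜ \ {e}))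
    {f : (E → Bool) → ℝ} (hf : Monotone f) :
    ∑ ω, w ω * resample pe (S₀ ∪ S) f ω ≤ ∑ ω, w ω * resample pe S₀ f ω := by
  refine Set.Finite.induction_on_subset S S.toFinite (by simp) fun {a T} haS _ haT ih => ?_
  by_cases ha : a ∈ S₀
  · rwa [Set.union_insert, Set.insert_eq_of_mem (Set.mem_union_left T ha)]
  have hcond : CondOpenGE w (pe a) a ((S₀ ∪ T)ᶜ \ {a}) := (hw a haS ha).mono <|
    Set.sdiff_subset_sdiff_left (Set.compl_subset_compl.2 Set.subset_union_left)
  rw [Set.union_insert, resample_insert pe (by simp [ha, haT])]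
  exact (sum_mul_averageEdge_le hcond (monotone_resample hpe _ hf)
    (dependsOn_resample pe _ f)).trans ih

theorem monotone_indicator_one_of_isUpperSet {α : Type*} [Preorder α] {A : Set α}
    (hA : IsUpperSet A) : Monotone (A.indicator (1 : α → ℝ)) := fun x y hxy => by
  by_cases hx : x ∈ A
  · simp [hx, hA hxy hx]
  · rw [Set.indicator_of_notMem hx]
    exact Set.indicator_nonneg (fun _ _ => zero_le_one) y

-- Once the edges of `F` are averaged out, the function depends on `Fᶜ` only, so that the bounds for
-- the edges of `Fᶜ` need not hold conditionally on `F`.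
theorem stochDom_of_condOpenGE {pe : E → ℝ} (hpe : ∀ e, pe e ∈ Set.Icc 0 1) (F : Set E)
    (hw₀ : ∀ ω, 0 < w ω) (hF : ∀ e ∈ F, CondOpenGE w (pe e) e {e}ᶜ)
    (hFc : ∀ e ∉ F, CondOpenGE w (pe e) e (Fᶜ \ {e})) :
    StochDom (berProb pe) (probOf w) := fun A hA => by
  have hmono : Monotone (A.indicator (1 : (E → Bool) → ℝ)) :=
    monotone_indicator_one_of_isUpperSet fun _ _ h hω => hA hω h
  have first := sum_mul_resample_union_le hpe (S₀ := ∅) (S := F)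
    (fun e he _ => by simpa [Set.compl_eq_univ_sdiff] using hF e he) hmono
  have second := sum_mul_resample_union_le hpe (S₀ := F) (S := Fᶜ) (fun e _ he => hFc e he) hmono
  rw [Set.empty_union, resample_empty, ← massOf_eq_sum_mul_indicator] at first
  simp_rw [Set.union_compl_self, resample_eq_berMean (dependsOn_univ _),
    ← berProb_eq_berMean_indicator, ← Finset.sum_mul, ← massOf_univ w] at second
  have mass_pos : 0 < massOf w Set.univ := by
    rw [massOf_univ]
    exact Finset.sum_pos (fun ω _ => hw₀ ω) Finset.univ_nonempty
  rw [probOf, le_div_iff₀ mass_pos, mul_comm]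
  exact second.trans first

theorem berProb_mul_massOf_le_of_isLowerSet {s : E → ℝ} (hs : ∀ e, s e ∈ Set.Icc 0 1) {F : Set E}
    (hw : ∀ e ∈ F, ∀ ω, (1 - s e) * w (update ω e true) ≤ s e * w (update ω e false))
    {A : Set (E → Bool)} (hA : IsLowerSet A) (hAF : DependsOn (· ∈ A) F) :
    berProb s A * massOf w Set.univ ≤ massOf w A := by
  have hmono : Monotone (-A.indicator (1 : (E → Bool) → ℝ)) := fun ω ω' hω => by
    have h := monotone_indicator_one_of_isUpperSet hA.compl hω
    simp only [Set.indicator_compl, Pi.sub_apply] at h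
    simpa only [Pi.neg_apply, neg_le_neg_iff] using (sub_le_sub_iff_left 1).1 h
  have hdep : DependsOn (A.indicator (1 : (E → Bool) → ℝ)) F := fun ω ω' h => by
    simp only [Set.indicator_apply, hAF h]
    rfl
  have hcond (e : E) (he : e ∈ F) : CondOpenGE (-w) (s e) e {e}ᶜ :=
    condOpenGE_of_forall_le fun ω => by simpa using hw e he ω
  have h := sum_mul_resample_union_le hs (S₀ := ∅) (S := F)
    (fun e he _ => by simpa [Set.compl_eq_univ_sdiff] using hcond e he) hmono
  simp only [Set.empty_union, resample_empty, resample_neg, Pi.neg_apply, neg_mul_neg,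
    resample_eq_berMean hdep, ← berProb_eq_berMean_indicator, ← Finset.sum_mul, ← massOf_univ w,
    ← massOf_eq_sum_mul_indicator] at h
  rwa [mul_comm]

theorem condOpenGE_of_isLowerSet {p p' : ℝ} (hpp' : p ≤ p') (hp' : p' ∈ Set.Icc 0 1)
    {F : Set E} (he : e ∉ F) {A : Set (E → Bool)} (hA : IsLowerSet A) (hAF : DependsOn (· ∈ A) F)
    (lower : ∀ ω, p * w (update ω e false) ≤ (1 - p) * w (update ω e true))
    (lower_mem : ∀ ω ∈ A, p' * w (update ω e false) ≤ (1 - p') * w (update ω e true))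
    (upper : ∀ x ∈ F, ∀ ω, (1 - p') * w (update ω x true) ≤ p' * w (update ω x false)) :
    CondOpenGE w (p + (p' - p) * berProb (fun _ => p') A) e (Fᶜ \ {e}) := fun D hD hDF => by
  let c : (E → Bool) → ℝ := fun ω => p + (p' - p) * A.indicator 1 ω
  have hc : DependsOn c {e}ᶜ := fun ω ω' h => by
    have hmem : (ω ∈ A) = (ω' ∈ A) := hAF fun x hx => h x (ne_of_mem_of_not_mem hx he)
    simp only [c, Set.indicator_apply, hmem, Pi.one_apply]
  have hcw (ω : E → Bool) : c ω * (w * D) (update ω e false) ≤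
      (1 - c ω) * (w * D) (update ω e true) := by
    have hD_update := apply_update_of_dependsOn hDF (e := e) (by simp) ω
    simp only [Pi.mul_apply, hD_update, ← mul_assoc]
    refine mul_le_mul_of_nonneg_right ?_ (hD ω)
    by_cases hω : ω ∈ A
    · simpa [c, hω] using lower_mem ω hω
    · simpa [c, hω] using lower ω
  have mass_le : berProb (fun _ => p') A * massOf (w * D) Set.univ ≤ massOf (w * D) A :=
    berProb_mul_massOf_le_of_isLowerSet (fun _ => hp') (fun x hx ω => by
      have hD_update := apply_update_of_dependsOn hDF (e := x) (by simp [hx]) ω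
      simp only [Pi.mul_apply, hD_update, ← mul_assoc]
      exact mul_le_mul_of_nonneg_right (upper x hx ω) (hD ω)) hA hAF
  calc (p + (p' - p) * berProb (fun _ => p') A) * massOf (w * D) Set.univ
      = p * massOf (w * D) Set.univ +
          (p' - p) * (berProb (fun _ => p') A * massOf (w * D) Set.univ) := by ring
    _ ≤ p * massOf (w * D) Set.univ + (p' - p) * massOf (w * D) A := by
        gcongr
    _ = ∑ ω, c ω * (w * D) ω := by
        rw [massOf_univ, massOf_eq_sum_mul_indicator, Finset.mul_sum, Finset.mul_sum,
          ← Finset.sum_add_distrib]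
        exact Finset.sum_congr rfl fun ω _ => by simp only [c]; ring
    _ ≤ massOf (w * D) {ω | ω e = true} := sum_mul_le_massOf_open hc hcw

end Comparison

section Components

theorem card_quotient_le_of_le {X : Type*} {r s : Setoid X} [Finite (Quotient r)] (h : r ≤ s) :
    Nat.card (Quotient s) ≤ Nat.card (Quotient r) :=
  Nat.card_le_card_of_surjective (Setoid.map_of_le h) <|
    Quotient.ind fun x => ⟨Quotient.mk r x, rfl⟩

theorem card_quotient_lt_of_lt {X : Type*} {r s : Setoid X} [Finite (Quotient r)] (h : r < s) :
    Nat.card (Quotient s) < Nat.card (Quotient r) := by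
  have hsurj : Surjective (Setoid.map_of_le h.le) := Quotient.ind fun x => ⟨Quotient.mk r x, rfl⟩
  refine (Nat.card_le_card_of_surjective _ hsurj).lt_of_ne fun hcard => h.not_ge ?_
  have hinj := ((Nat.bijective_iff_surjective_and_card _).2 ⟨hsurj, hcard.symm⟩).injective
  exact fun _ _ hxy => Quotient.exact (hinj (Quotient.sound hxy))

-- The map on `Quotient r` sending the class of `b` to that of `a` factors through `Quotient s`
-- and fixes every class other than that of `b`.
theorem card_quotient_le_add_one {X : Type*} {r s : Setoid X} [Finite (Quotient r)] (hrs : r ≤ s)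
    {a b : X} (hs : ∀ t : Setoid X, r ≤ t → t a b → s ≤ t) :
    Nat.card (Quotient r) ≤ Nat.card (Quotient s) + 1 := by
  let merge (c : Quotient r) : Quotient r := if c = ⟦b⟧ then ⟦a⟧ else c
  have hker : s ≤ Setoid.ker fun x => merge ⟦x⟧ := by
    refine hs _ (fun _ _ hxy => congrArg merge (Quotient.sound hxy)) ?_
    simp [Setoid.ker_def, merge]
  let toOption (c : Quotient r) : Option (Quotient s) :=
    if c = ⟦b⟧ then none else some (Setoid.map_of_le hrs c)
  have toOption_injective : Injective toOption := by
    refine Quotient.ind₂ fun x y hxy => ?_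
    simp only [toOption] at hxy
    split_ifs at hxy with hx hy hy
    · rw [hx, hy]
    · have hmerge : merge ⟦x⟧ = merge ⟦y⟧ := hker (Quotient.exact (Option.some.inj hxy))
      simpa [merge, hx, hy] using hmerge
  have : Finite (Quotient s) := Finite.of_surjective (Setoid.map_of_le hrs) <|
    Quotient.ind fun x => ⟨Quotient.mk r x, rfl⟩
  simpa only [Finite.card_option] using Nat.card_le_card_of_injective toOption toOption_injective

variable {ends : E → Sym2 V} {α : Setoid V}

theorem connSetoid_mono : Monotone (connSetoid ends α) := fun _ _ h =>
  Setoid.eqvGen_mono fun _ _ ⟨e, he, hxy⟩ => ⟨e, h he, hxy⟩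

theorem endsConn_iff {F : Set E} {e : E} {x y : V} (hxy : ends e = s(x, y)) :
    EndsConn ends α F e ↔ connSetoid ends α F ⟦x⟧ ⟦y⟧ := by
  refine ⟨fun h => h x y hxy, fun h x' y' hxy' => ?_⟩
  rcases Sym2.eq_iff.1 (hxy.symm.trans hxy') with ⟨rfl, rfl⟩ | ⟨rfl, rfl⟩
  · exact h
  · exact (connSetoid ends α F).symm h

theorem endsConn_of_mem {F : Set E} {e : E} (he : e ∈ F) : EndsConn ends α F e :=
  fun _ _ hxy => Relation.EqvGen.rel _ _ ⟨e, he, by rw [hxy]; rfl⟩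

theorem EndsConn.mono {F G : Set E} {e : E} (hFG : F ⊆ G) (h : EndsConn ends α F e) :
    EndsConn ends α G e := fun x y hxy => connSetoid_mono hFG (h x y hxy)

theorem connSetoid_insert_le {F : Set E} {e : E} {x y : V} (hxy : ends e = s(x, y))
    {t : Setoid (Quotient α)} (hF : connSetoid ends α F ≤ t) (ht : t ⟦x⟧ ⟦y⟧) :
    connSetoid ends α (insert e F) ≤ t := by
  refine Setoid.eqvGen_le ?_
  rintro u v ⟨e', rfl | he', huv⟩
  · rw [hxy, Sym2.map_mk] at huv
    rcases Sym2.eq_iff.1 huv with ⟨rfl, rfl⟩ | ⟨rfl, rfl⟩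
    · exact ht
    · exact t.symm ht
  · exact hF (Relation.EqvGen.rel _ _ ⟨e', he', huv⟩)

theorem setOf_update_true (ω : E → Bool) (e : E) :
    {x | update ω e true x = true} = insert e {x | update ω e false x = true} := by
  ext x
  by_cases hx : x = e <;> simp [hx]

variable [Finite V]

theorem numComponents_antitone : Antitone (numComponents ends α) := fun _ _ h =>
  card_quotient_le_of_le <| connSetoid_mono fun e he => h e he

theorem numComponents_update_false_le (ω : E → Bool) (e : E) :
    numComponents ends α (update ω e false) ≤ numComponents ends α (update ω e true) + 1 := by
  obtain ⟨x, y, hxy⟩ := Sym2.exists.1 ⟨ends e, rfl⟩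
  rw [numComponents, numComponents, setOf_update_true]
  exact card_quotient_le_add_one (connSetoid_mono (Set.subset_insert _ _))
    fun _ => connSetoid_insert_le hxy

theorem numComponents_update_true_lt {ω : E → Bool} {e : E}
    (h : ¬ EndsConn ends α {x | update ω e false x = true} e) :
    numComponents ends α (update ω e true) < numComponents ends α (update ω e false) := by
  rw [numComponents, numComponents, setOf_update_true]
  refine card_quotient_lt_of_lt ((connSetoid_mono (Set.subset_insert _ _)).lt_of_not_ge ?_)
  exact fun hle => h fun x y hxy => hle (endsConn_of_mem (Set.mem_insert _ _) x y hxy)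

end Components

section ClosedCut

variable {ends : E → Sym2 V} {α : Setoid V} {F : Set E} {e : E}

/-- The event that some cutset for `e` included in `F` is entirely closed. -/
def closedCutEvent (ends : E → Sym2 V) (α : Setoid V) (F : Set E) (e : E) : Set (E → Bool) :=
  {ω | ∃ χ ∈ Cutsets ends α F e, ∀ e' ∈ χ, ω e' = false}

theorem isLowerSet_closedCutEvent : IsLowerSet (closedCutEvent ends α F e) :=
  fun _ _ hle ⟨χ, hχ, hclosed⟩ =>
    ⟨χ, hχ, fun x hx => Bool.eq_false_of_le_false (hclosed x hx ▸ hle x)⟩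

theorem dependsOn_closedCutEvent : DependsOn (· ∈ closedCutEvent ends α F e) F :=
  fun _ _ h => propext <| exists_congr fun _ => and_congr_right fun hχ =>
    forall₂_congr fun x hx => by rw [h x (hχ.1 hx)]

theorem not_endsConn_of_mem_closedCutEvent {ω : E → Bool} (hω : ω ∈ closedCutEvent ends α F e) :
    ¬ EndsConn ends α {x | update ω e false x = true} e := by
  obtain ⟨χ, ⟨-, hcut⟩, hclosed⟩ := hω
  refine mt (EndsConn.mono fun x hx => ?_) hcut
  have hxe : x ≠ e := by
    rintro rfl
    simp at hx
  have hωx : ω x = true := by simpa [hxe] using hx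
  exact ⟨fun hxχ => by simp [hclosed x hxχ] at hωx, hxe⟩

end ClosedCut

section RandomCluster

variable {p q : ℝ}

theorem lt_pPrime_iff (hp : p ∈ Set.Ioo 0 1) (hq : 0 < q) : p < pPrime p q ↔ q < 1 := by
  have hp₁ : 0 < 1 - p := sub_pos.2 hp.2
  have hden : 0 < p + q * (1 - p) := add_pos hp.1 (mul_pos hq hp₁)
  rw [pPrime, lt_div_iff₀ hden, mul_lt_iff_lt_one_right hp.1, ← lt_sub_iff_add_lt',
    mul_lt_iff_lt_one_left hp₁]

theorem pPrime_mem_Icc (hp : p ∈ Set.Icc 0 1) (hq : 0 ≤ q) : pPrime p q ∈ Set.Icc 0 1 := by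
  have hclosed : 0 ≤ q * (1 - p) := mul_nonneg hq (sub_nonneg.2 hp.2)
  exact ⟨div_nonneg hp.1 (add_nonneg hp.1 hclosed),
    div_le_one_of_le₀ (le_add_of_nonneg_right hclosed) (add_nonneg hp.1 hclosed)⟩

theorem mul_one_sub_pPrime (hp : p ∈ Set.Ioo 0 1) (hq : 0 < q) :
    p * (1 - pPrime p q) = pPrime p q * (q * (1 - p)) := by
  have hden : p + q * (1 - p) ≠ 0 := (add_pos hp.1 (mul_pos hq (sub_pos.2 hp.2))).ne'
  rw [pPrime]
  field_simp
  ring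

variable [Fintype E] {ends : E → Sym2 V} {α : Setoid V}

theorem fkWeight_eq (ω : E → Bool) :
    fkWeight ends α p q ω = berWeight (fun _ => p) ω * q ^ numComponents ends α ω := by
  simp [fkWeight, berWeight, Finset.prod_ite]

theorem fkWeight_pos (hp : p ∈ Set.Ioo 0 1) (hq : 0 < q) (ω : E → Bool) :
    0 < fkWeight ends α p q ω := by
  have hp₀ : 0 < p := hp.1
  have hp₁ : 0 < 1 - p := sub_pos.2 hp.2
  unfold fkWeight
  positivity

theorem one_sub_pPrime_mul_berWeight (hp : p ∈ Set.Ioo 0 1) (hq : 0 < q) (ω : E → Bool) (e : E) :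
    (1 - pPrime p q) * berWeight (fun _ => p) (update ω e true) =
      pPrime p q * q * berWeight (fun _ => p) (update ω e false) := by
  refine mul_left_cancel₀ hp.1.ne' ?_
  linear_combination berWeight (fun _ => p) (update ω e true) * mul_one_sub_pPrime hp hq +
    pPrime p q * q * one_sub_mul_berWeight_update_true (fun _ => p) ω e

theorem one_sub_pPrime_mul_fkWeight (hp : p ∈ Set.Ioo 0 1) (hq : 0 < q) (ω : E → Bool) (e : E) :
    (1 - pPrime p q) * fkWeight ends α p q (update ω e true) =
      pPrime p q * (berWeight (fun _ => p) (update ω e false) *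
        q ^ (numComponents ends α (update ω e true) + 1)) := by
  rw [fkWeight_eq, ← mul_assoc, one_sub_pPrime_mul_berWeight hp hq, pow_succ]
  ring

variable [Finite V]

theorem mul_fkWeight_update_false_le (hp : p ∈ Set.Icc 0 1) (hq : q ∈ Set.Icc 0 1)
    (ω : E → Bool) (e : E) :
    p * fkWeight ends α p q (update ω e false) ≤
      (1 - p) * fkWeight ends α p q (update ω e true) := by
  have hk : numComponents ends α (update ω e true) ≤ numComponents ends α (update ω e false) :=
    numComponents_antitone (update_le_update_iff'.2 (Bool.false_le _))
  rw [fkWeight_eq, fkWeight_eq, ← mul_assoc, ← mul_assoc,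
    one_sub_mul_berWeight_update_true (fun _ => p)]
  exact mul_le_mul_of_nonneg_left (pow_le_pow_of_le_one hq.1 hq.2 hk)
    (mul_nonneg hp.1 (berWeight_nonneg (fun _ => hp) _))

theorem one_sub_pPrime_mul_fkWeight_le (hp : p ∈ Set.Ioo 0 1) (hq : q ∈ Set.Ioc 0 1)
    (ω : E → Bool) (e : E) :
    (1 - pPrime p q) * fkWeight ends α p q (update ω e true) ≤
      pPrime p q * fkWeight ends α p q (update ω e false) := by
  rw [one_sub_pPrime_mul_fkWeight hp hq.1, fkWeight_eq]
  have hp' := Set.Ioo_subset_Icc_self hp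
  exact mul_le_mul_of_nonneg_left (mul_le_mul_of_nonneg_left
    (pow_le_pow_of_le_one hq.1.le hq.2 (numComponents_update_false_le ω e))
    (berWeight_nonneg (fun _ => hp') _)) (pPrime_mem_Icc hp' hq.1.le).1

theorem pPrime_mul_fkWeight_le (hp : p ∈ Set.Ioo 0 1) (hq : q ∈ Set.Ioc 0 1)
    {ω : E → Bool} {e : E} (h : ¬ EndsConn ends α {x | update ω e false x = true} e) :
    pPrime p q * fkWeight ends α p q (update ω e false) ≤
      (1 - pPrime p q) * fkWeight ends α p q (update ω e true) := by
  rw [one_sub_pPrime_mul_fkWeight hp hq.1, fkWeight_eq]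
  have hp' := Set.Ioo_subset_Icc_self hp
  exact mul_le_mul_of_nonneg_left (mul_le_mul_of_nonneg_left
    (pow_le_pow_of_le_one hq.1.le hq.2 (numComponents_update_true_lt h))
    (berWeight_nonneg (fun _ => hp') _)) (pPrime_mem_Icc hp' hq.1.le).1

end RandomCluster

/-- **Proposition 3.1, item 1** (lower enhancement via cutsets, case `p < p'`). -/
theorem below_enhancement_of_lt
    {V E : Type*} [Fintype V] [Fintype E]
    (ends : E → Sym2 V) (α : Setoid V)
    (p q : ℝ) (hp : p ∈ Set.Ioo (0 : ℝ) 1) (hq : 0 < q)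
    (hpp' : p < pPrime p q)
    (Ehat : Set E)
    (hcut : ∀ e ∈ Ehat, ∃ χ : Set E, χ ∈ Cutsets ends α Ehatᶜ e)
    (εhat : E → ℝ)
    (hε : ∀ e, εhat e =
      if e ∈ Ehat then
        (pPrime p q - p) *
          berProb (fun _ => max p (pPrime p q))
            {ω | ∃ χ ∈ Cutsets ends α Ehatᶜ e, ∀ e' ∈ χ, ω e' = false}
      else 0) :
    StochDom (berProb fun e => p + εhat e) (fkProb ends α p q) := by
  have hp' : p ∈ Set.Icc 0 1 := Set.Ioo_subset_Icc_self hp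
  have hq₁ : q ∈ Set.Ioc 0 1 := ⟨hq, ((lt_pPrime_iff hp hq).1 hpp').le⟩
  have hpPrime := pPrime_mem_Icc hp' hq.le
  rw [max_eq_right hpp'.le] at hε
  have lower := mul_fkWeight_update_false_le (ends := ends) (α := α) hp'
    (Set.Ioc_subset_Icc_self hq₁)
  have hmem (e : E) : p + εhat e ∈ Set.Icc 0 1 := by
    rw [hε]
    split_ifs
    · rw [mul_comm]
      exact (convex_Icc 0 1).add_smul_sub_mem hp' hpPrime (berProb_mem_Icc (fun _ => hpPrime) _)
    · rwa [add_zero]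
  refine stochDom_of_condOpenGE hmem Ehatᶜ (fkWeight_pos hp hq) (fun e he => ?_) fun e he => ?_
  · rw [hε, if_neg he, add_zero]
    exact condOpenGE_of_forall_le fun ω => lower ω e
  · rw [hε, if_pos (not_not.1 he)]
    exact condOpenGE_of_isLowerSet hpp'.le hpPrime he isLowerSet_closedCutEvent
      dependsOn_closedCutEvent (fun ω => lower ω e)
      (fun ω hω => pPrime_mul_fkWeight_le hp hq₁ (not_endsConn_of_mem_closedCutEvent hω))
      fun x _ ω => one_sub_pPrime_mul_fkWeight_le hp hq₁ ω x

end FKPaper
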